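/- For every rational number α ≥ 1, the q-Gamma function satisfies Γ_q(α+1) = [α]_q · Γ_q(α), an identity in ℚ((q)). -/

import Mathlib

/-!
Write `Q = {α}_q = 1 + (q-1)[α]_q`; the shift rule `[α+1]_q = 1 + q[α]_q` gives `{α-1}_q = Q/q`.
With `x = Q/q`, the `k`-th term of `S_α` becomes `t_k(x) = q^k ∏_{i<k} (x - q^i)/(1 - q^{i+1})`
(`gammaTerm_eq`), that of `S_{α+1}` is `t_k(qx)`, and the partial sums satisfy
`∑_{k≤K} t_k(qx) = (1 - Q) ∑_{k≤K} t_k(x) + Q t_K(x)` (`sum_telTerm`).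
For `α ≥ 1` one has `[α]_q = 1 + O(q)` (`ordGE_qCF`, by induction along the continued fraction),
so `Q = O(q)`, `x = O(1)` and `t_K(x) = O(q^K)`: the error term tends to zero and
`S_{α+1} = (1 - Q) S_α = (1 - q)[α]_q S_α` (`gammaSum_succ`).
The factor `1 - q` is absorbed by `(1 - q) T_{α+1} = T_α` (`Tser_succ`).
-/


noncomputable section

open Finset

/-- The `q`-integer `[n]_q = 1 + q + ⋯ + q^{n-1}` as a rational function in `q`. -/
def qNum (n : ℕ) : RatFunc ℚ := ∑ i ∈ Finset.range n, RatFunc.X ^ i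

/-- The `q⁻¹`-integer `[n]_{q⁻¹} = 1 + q⁻¹ + ⋯ + q^{-(n-1)}`. -/
def qNumInv (n : ℕ) : RatFunc ℚ := ∑ i ∈ Finset.range n, (RatFunc.X)⁻¹ ^ i

/-- The continued fraction expansion of `p/q` computed by the Euclidean algorithm. -/
def cfNat (p q : ℕ) : List ℕ :=
  if h : q = 0 then [] else (p / q) :: cfNat q (p % q)
termination_by q
decreasing_by exact Nat.mod_lt _ (Nat.pos_of_ne_zero h)

/-- Turn a continued fraction expansion into one of even length,
replacing a final coefficient `aₙ` by `aₙ - 1, 1` if needed. -/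
def evenize (l : List ℕ) : List ℕ :=
  if l.length % 2 = 0 then l else l.dropLast ++ [l.getLast! - 1, 1]

/-- Evaluation of the Morier-Genoud--Ovsienko `q`-deformed continued fraction
`[a₁]_q + q^{a₁}/([a₂]_{q⁻¹} + q^{-a₂}/([a₃]_q + ⋯ + q^{a_{2m-1}}/[a_{2m}]_{q⁻¹}))`.
The boolean records whether the current position is odd (`true`) or even (`false`).
(The empty continued fraction is sent to `0`; since division by zero yields `0`
in `RatFunc ℚ`, a final term `[a]_{q⁻¹} + q^{-a}/0⁻ = [a]_{q⁻¹}` comes out correctly.) -/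
def qCF : Bool → List ℕ → RatFunc ℚ
  | _, [] => 0
  | true, a :: l => qNum a + RatFunc.X ^ a / qCF false l
  | false, a :: l => qNumInv a + (RatFunc.X)⁻¹ ^ a / qCF true l

/-- The Morier-Genoud--Ovsienko `q`-rational of `α > 1`, via the even-length
continued fraction expansion of `α`. -/
def qRatCF (α : ℚ) : RatFunc ℚ := qCF true (evenize (cfNat α.num.toNat α.den))

/-- The Morier-Genoud--Ovsienko `q`-rational `[α]_q ∈ ℚ(q)`, for all `α ∈ ℚ`:
for `α > 1` it is given by the `q`-deformed continued fraction, and it is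
extended to all of `ℚ` by the rule `[α-1]_q = ([α]_q - 1)/q`. -/
def qRat (α : ℚ) : RatFunc ℚ :=
  if 1 < α then qRatCF α
  else (qRatCF (α + (2 - ⌊α⌋).toNat) - qNum (2 - ⌊α⌋).toNat) / RatFunc.X ^ (2 - ⌊α⌋).toNat

/-- `{α}_q := [α+1]_q - [α]_q`, the substitute for `q^α`. -/
def qPow (α : ℚ) : RatFunc ℚ := qRat (α + 1) - qRat α

/-- The `q`-factorial `[k]_q!`. -/
def qFact (k : ℕ) : RatFunc ℚ := ∏ i ∈ Finset.range k, qNum (i + 1)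

/-- The `q`-binomial coefficient `binom(α,k)_q = [α]_q [α-1]_q ⋯ [α-k+1]_q / [k]_q!`. -/
def qBinom (α : ℚ) (k : ℕ) : RatFunc ℚ :=
  (∏ i ∈ Finset.range k, qRat (α - i)) / qFact k

/-- The Laurent-series expansion (at `q = 0`) of a rational function. -/
def lau (f : RatFunc ℚ) : LaurentSeries ℚ := ↑f


/-- The element `q` of the field of Laurent series `ℚ((q))`. -/
def qL : LaurentSeries ℚ := HahnSeries.single 1 1

/-- The `k`-th term `(-1)^k·q^{k(k+1)/2}·binom(α-1,k)_q` of the series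
`B_{α-1}(q,-q)` defining the `q`-Gamma function. -/
def gammaTerm (α : ℚ) (k : ℕ) : LaurentSeries ℚ :=
  (-1 : LaurentSeries ℚ) ^ k * qL ^ (k * (k + 1) / 2) * lau (qBinom (α - 1) k)

/-- The ordinary generalized binomial coefficient `C(α+n-2,n)
  = (α-1)·α·(α+1)⋯(α+n-2)/n!`. -/
def genBinom (α : ℚ) (n : ℕ) : ℚ := (∏ i ∈ Finset.range n, (α - 1 + i)) / n.factorial

/-- `T_α = 1/(1-q)^{α-1} := Σ_{n≥0} C(α+n-2,n)·qⁿ`, as a Laurent series. -/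
def Tser (α : ℚ) : LaurentSeries ℚ :=
  HahnSeries.ofPowerSeries ℤ ℚ (PowerSeries.mk fun n => genBinom α n)

/-- `S` is the sum `S_α = Σ_{k≥0} (-1)^k·q^{k(k+1)/2}·binom(α-1,k)_q = B_{α-1}(q,-q)`,
in the sense that each `q`-coefficient of the partial sums stabilizes to that of `S`. -/
def IsGammaSum (α : ℚ) (S : LaurentSeries ℚ) : Prop :=
  ∀ m : ℤ, ∃ K₀ : ℕ, ∀ K ≥ K₀,
    (∑ k ∈ Finset.range K, gammaTerm α k).coeff m = S.coeff m

/-! ### Orders of vanishing of Laurent series -/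

/-- `x = O(q^n)`: all coefficients of `x` in degrees `< n` vanish. -/
def OrdGE (n : ℤ) (x : LaurentSeries ℚ) : Prop := (n : WithTop ℤ) ≤ x.orderTop

lemma ordGE_iff {n : ℤ} {x : LaurentSeries ℚ} :
    OrdGE n x ↔ ∀ m < n, x.coeff m = 0 := by
  unfold OrdGE
  rw [HahnSeries.le_orderTop_iff_forall]
  simp

lemma OrdGE.mono {m n : ℤ} {x : LaurentSeries ℚ} (h : OrdGE n x) (hmn : m ≤ n) : OrdGE m x :=
  ordGE_iff.2 fun k hk => ordGE_iff.1 h k (hk.trans_le hmn)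

lemma OrdGE.add {n : ℤ} {x y : LaurentSeries ℚ} (hx : OrdGE n x) (hy : OrdGE n y) :
    OrdGE n (x + y) := by
  rw [ordGE_iff] at *
  intro m hm
  simp [hx m hm, hy m hm]

lemma OrdGE.sub {n : ℤ} {x y : LaurentSeries ℚ} (hx : OrdGE n x) (hy : OrdGE n y) :
    OrdGE n (x - y) := by
  rw [ordGE_iff] at *
  intro m hm
  simp [hx m hm, hy m hm]

lemma OrdGE.mul {m n : ℤ} {x y : LaurentSeries ℚ} (hx : OrdGE m x) (hy : OrdGE n y) :
    OrdGE (m + n) (x * y) := by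
  unfold OrdGE at *
  rw [HahnSeries.orderTop_mul]
  push_cast
  exact add_le_add hx hy

lemma ordGE_one : OrdGE 0 (1 : LaurentSeries ℚ) := by
  simp [OrdGE]

lemma OrdGE.sum {n : ℤ} {ι : Type*} (s : Finset ι) (f : ι → LaurentSeries ℚ)
    (h : ∀ i ∈ s, OrdGE n (f i)) : OrdGE n (∑ i ∈ s, f i) := by
  rw [ordGE_iff]
  intro m hm
  rw [HahnSeries.coeff_sum]
  exact Finset.sum_eq_zero fun i hi => ordGE_iff.1 (h i hi) m hm

/-- A Laurent series vanishing to arbitrarily high order is zero. -/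
lemma eq_zero_of_ordGE {x : LaurentSeries ℚ} (h : ∀ n : ℕ, OrdGE n x) : x = 0 := by
  ext m
  exact ordGE_iff.1 (h (m.toNat + 1)) m (by push_cast; omega)

lemma OrdGE.inv_unit {x : LaurentSeries ℚ} (h : OrdGE 1 (x - 1)) : OrdGE 0 x⁻¹ := by
  have h0 : x.orderTop = 0 := by
    have hx : x = 1 - (1 - x) := by ring
    rw [← HahnSeries.orderTop_one (Γ := ℤ) (R := ℚ), hx, HahnSeries.orderTop_sub]
    rw [HahnSeries.orderTop_one, ← neg_sub, HahnSeries.orderTop_neg]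
    exact lt_of_lt_of_le (by exact_mod_cast zero_lt_one) h
  have hx0 : x ≠ 0 := by
    rintro rfl
    simp at h0
  have h1 := HahnSeries.orderTop_mul x x⁻¹
  rw [mul_inv_cancel₀ hx0, h0, zero_add, HahnSeries.orderTop_one] at h1
  exact h1.le

lemma OrdGE.inv_sub_one {x : LaurentSeries ℚ} (h : OrdGE 1 (x - 1)) : OrdGE 1 (x⁻¹ - 1) := by
  have hx0 : x ≠ 0 := by
    rintro rfl
    have := ordGE_iff.1 h 0 (by norm_num)
    simp at this
  have : x⁻¹ - 1 = (0 - (x - 1)) * x⁻¹ := by field_simp; ring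
  rw [this]
  exact (OrdGE.sub (by simp [OrdGE]) h).mul h.inv_unit

/-! ### Expansion of rational functions at `q = 0` -/

open scoped RatFunc in
/-- The expansion map `F(q) → F((q))` over an arbitrary field, as a ring homomorphism. -/
def expandHom (F : Type*) [Field F] : RatFunc F →+* LaurentSeries F :=
  algebraMap (RatFunc F) (LaurentSeries F)

/-- The expansion map `lau`, as a ring homomorphism. -/
def lauHom : RatFunc ℚ →+* LaurentSeries ℚ := expandHom ℚ

lemma lau_eq (f : RatFunc ℚ) : lau f = lauHom f := rfl

lemma lau_add (f g : RatFunc ℚ) : lau (f + g) = lau f + lau g := by simp [lau_eq]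
lemma lau_sub (f g : RatFunc ℚ) : lau (f - g) = lau f - lau g := by simp [lau_eq]
lemma lau_mul (f g : RatFunc ℚ) : lau (f * g) = lau f * lau g := by simp [lau_eq]
lemma lau_div (f g : RatFunc ℚ) : lau (f / g) = lau f / lau g := by simp [lau_eq]
lemma lau_pow (f : RatFunc ℚ) (n : ℕ) : lau (f ^ n) = lau f ^ n := by simp [lau_eq]
lemma lau_one : lau 1 = 1 := by simp [lau_eq]
lemma lau_sum {ι : Type*} (s : Finset ι) (f : ι → RatFunc ℚ) :
    lau (∑ i ∈ s, f i) = ∑ i ∈ s, lau (f i) := by simp [lau_eq]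
lemma lau_X : lau RatFunc.X = qL := RatFunc.coe_X

lemma ordGE_qL : OrdGE 1 qL := HahnSeries.orderTop_single_le

lemma ordGE_qL_pow (n : ℕ) : OrdGE n (qL ^ n) := by
  induction n with
  | zero => simpa using ordGE_one
  | succ n ih =>
    rw [pow_succ]
    push_cast
    exact ih.mul ordGE_qL

lemma ordGE_qNum (n : ℕ) : OrdGE 0 (lau (qNum n)) := by
  rw [qNum, lau_sum]
  refine OrdGE.sum _ _ fun i _ => ?_
  rw [lau_pow, lau_X]
  exact (ordGE_qL_pow i).mono (by omega)

lemma qNum_succ (n : ℕ) : qNum (n + 1) = 1 + RatFunc.X * qNum n := by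
  rw [qNum, Finset.sum_range_succ', qNum, Finset.mul_sum, add_comm]
  simp [pow_succ']

lemma qNum_add_one (n : ℕ) : qNum (n + 1) = qNum n + RatFunc.X ^ n := by
  simp [qNum, Finset.sum_range_succ]

lemma qNum_mul (n : ℕ) : qNum n * (RatFunc.X - 1) = RatFunc.X ^ n - 1 := geom_sum_mul _ _

lemma qX_ne : (RatFunc.X : RatFunc ℚ) ≠ 0 := RatFunc.X_ne_zero

lemma pow_mul_qNumInv (n : ℕ) :
    RatFunc.X ^ n * qNumInv n = (RatFunc.X : RatFunc ℚ) * qNum n := by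
  have hX := qX_ne
  rw [qNumInv, qNum, ← Finset.sum_range_reflect, Finset.mul_sum, Finset.mul_sum]
  refine Finset.sum_congr rfl fun i hi => ?_
  have hi' := Finset.mem_range.1 hi
  obtain ⟨c, rfl⟩ := Nat.exists_eq_add_of_lt hi'
  have : i + c + 1 - 1 - i = c := by omega
  rw [this, inv_pow]
  field_simp
  ring

lemma ordGE_qNum_sub_one {n : ℕ} (hn : 1 ≤ n) : OrdGE 1 (lau (qNum n) - 1) := by
  obtain ⟨k, rfl⟩ := Nat.exists_eq_add_of_le' hn
  rw [qNum_succ, lau_add, lau_mul, lau_one, lau_X, add_sub_cancel_left]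
  exact ordGE_qL.mul (ordGE_qNum k)

/-! ### Shift and leading term of `q`-rationals -/

lemma qCF_succ (a : ℕ) (l : List ℕ) :
    qCF true ((a + 1) :: l) = 1 + RatFunc.X * qCF true (a :: l) := by
  simp only [qCF, qNum_succ]
  ring

lemma cfNat_pos {p q : ℕ} (hq : 0 < q) : cfNat p q = (p / q) :: cfNat q (p % q) := by
  rw [cfNat, dif_neg hq.ne']

lemma cfNat_zero (p : ℕ) : cfNat p 0 = [] := by
  rw [cfNat, dif_pos rfl]

/-- Beyond length one, normalising to even length does not touch the first partial quotient, and
its effect on the tail does not depend on it. -/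
lemma evenize_cons {t : List ℕ} (ht : t ≠ []) : ∃ s, ∀ a, evenize (a :: t) = a :: s := by
  obtain ⟨b, l, rfl⟩ := List.exists_cons_of_ne_nil ht
  by_cases h : (l.length + 1 + 1) % 2 = 0
  · exact ⟨b :: l, fun a => by simp [evenize, h]⟩
  · exact ⟨(b :: l).dropLast ++ [(b :: l).getLast! - 1, 1], fun a => by
      simp [evenize, h, List.getLast!_eq_getLast?_getD]⟩

lemma evenize_single (a : ℕ) : evenize [a] = [a - 1, 1] := by
  simp [evenize, List.getLast!_eq_getLast?_getD]

lemma evenize_pair (a b : ℕ) : evenize [a, b] = [a, b] := by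
  simp [evenize]

lemma evenize_cons_cons (a b : ℕ) {l : List ℕ} (hl : l ≠ []) :
    evenize (a :: b :: l) = a :: b :: evenize l := by
  obtain ⟨c, l, rfl⟩ := List.exists_cons_of_ne_nil hl
  have e : (l.length + 1 + 1 + 1) % 2 = (l.length + 1) % 2 := by omega
  by_cases h : (l.length + 1) % 2 = 0
  · simp [evenize, h, e]
  · simp [evenize, h, e, List.getLast!_eq_getLast?_getD]

lemma qCF_cfNat_add {p q : ℕ} (hq : 0 < q) (hpq : q < p) :
    qCF true (evenize (cfNat (p + q) q)) = 1 + RatFunc.X * qCF true (evenize (cfNat p q)) := by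
  rw [cfNat_pos hq, cfNat_pos hq, Nat.add_div_right _ hq, Nat.add_mod_right]
  -- For an integer `p/q` the last entry is split as `a - 1, 1`, and `p/q ≥ 1` makes the
  -- truncated subtraction commute with the shift.
  by_cases ht : cfNat q (p % q) = []
  · rw [ht, evenize_single, evenize_single]
    obtain ⟨c, hc⟩ := Nat.exists_eq_add_of_le' (Nat.div_pos hpq.le hq)
    rw [hc]
    exact qCF_succ _ _
  · obtain ⟨s, hs⟩ := evenize_cons ht
    rw [hs, hs]
    exact qCF_succ _ _

lemma qRatCF_add_one {α : ℚ} (hα : 1 < α) : qRatCF (α + 1) = 1 + RatFunc.X * qRatCF α := by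
  have hd : (α + 1).den = α.den := by simp
  have hn : (α + 1).num = α.num + α.den := by
    have h := Rat.num_div_den (α + 1)
    have h' := Rat.num_div_den α
    have hp : (α.den : ℚ) ≠ 0 := by exact_mod_cast α.den_ne_zero
    rw [hd, div_eq_iff hp] at h
    rw [div_eq_iff hp] at h'
    have : ((α + 1).num : ℚ) = α.num + α.den := by rw [h, h']; ring
    exact_mod_cast this
  have hlt : (α.den : ℤ) < α.num := by
    have h := Rat.num_div_den α
    have hp : (0 : ℚ) < α.den := by exact_mod_cast α.pos
    rw [← h, lt_div_iff₀ hp] at hα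
    exact_mod_cast (by simpa using hα : (α.den : ℚ) < α.num)
  have e : (α.num + α.den).toNat = α.num.toNat + α.den := by omega
  rw [qRatCF, qRatCF, hd, hn, e]
  exact qCF_cfNat_add α.pos (by omega)

lemma qRatCF_add_nat {α : ℚ} (hα : 1 < α) (n : ℕ) :
    qRatCF (α + n) = qNum n + RatFunc.X ^ n * qRatCF α := by
  induction n with
  | zero => simp [qNum]
  | succ n ih =>
    have h : (1 : ℚ) < α + n := by
      have : (0 : ℚ) ≤ n := n.cast_nonneg
      linarith
    rw [Nat.cast_succ, ← add_assoc, qRatCF_add_one h, ih, qNum_succ]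
    ring

/-- Any sufficiently large translate may be used to compute `[α]_q`. -/
lemma qRat_eq (α : ℚ) (n : ℕ) (h : 1 < α + n) :
    qRat α = (qRatCF (α + n) - qNum n) / RatFunc.X ^ n := by
  have hX := qX_ne
  have key : ∀ m k : ℕ, 1 < α + m → (qRatCF (α + m) - qNum m) / RatFunc.X ^ m =
      (qRatCF (α + (m + k : ℕ)) - qNum (m + k)) / RatFunc.X ^ (m + k) := by
    intro m k hm
    have hs : qNum (m + k) = qNum k + RatFunc.X ^ k * qNum m := by
      rw [add_comm m k, qNum, qNum, qNum, Finset.sum_range_add, Finset.mul_sum]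
      simp [pow_add]
    rw [Nat.cast_add, ← add_assoc, qRatCF_add_nat hm, hs]
    field_simp
    ring
  have key2 : ∀ m k : ℕ, 1 < α + m → 1 < α + k → (qRatCF (α + m) - qNum m) / RatFunc.X ^ m =
      (qRatCF (α + k) - qNum k) / RatFunc.X ^ k := by
    intro m k hm hk
    rcases le_total m k with hmk | hmk
    · obtain ⟨c, rfl⟩ := Nat.exists_eq_add_of_le hmk
      exact key m c hm
    · obtain ⟨c, rfl⟩ := Nat.exists_eq_add_of_le hmk
      exact (key k c hk).symm
  by_cases h1 : 1 < α
  · rw [qRat, if_pos h1, ← key2 0 n (by simpa using h1) h]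
    simp [qNum]
  · rw [qRat, if_neg h1]
    refine key2 _ _ ?_ h
    have hf := Int.lt_floor_add_one α
    have hz : (2 - ⌊α⌋ : ℤ) ≤ ((2 - ⌊α⌋).toNat : ℤ) := Int.self_le_toNat _
    have hq : (2 - ⌊α⌋ : ℚ) ≤ ((2 - ⌊α⌋).toNat : ℚ) := by exact_mod_cast hz
    have := Int.floor_le α
    linarith

lemma qRat_add_one (α : ℚ) : qRat (α + 1) = 1 + RatFunc.X * qRat α := by
  have hX := qX_ne
  obtain ⟨n, hn⟩ := exists_nat_gt (1 - α)
  rw [qRat_eq (α + 1) n (by linarith), qRat_eq α (n + 1) (by push_cast; linarith),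
    show α + 1 + (n : ℚ) = α + (n + 1 : ℕ) by push_cast; ring, qNum_add_one]
  field_simp
  ring

/-- For `p > q > 0`, coprime or not, the `q`-deformation of `p/q` is `1 + O(q)`.
Removing two partial quotients `a, b` at a time, with remaining tail `G = 1 + O(q)`, the value is
`[a]_q + q^{a+b} / (q [b]_q + G⁻¹)`. -/
lemma ordGE_qCF : ∀ q p : ℕ, 0 < q → q < p →
    OrdGE 1 (lau (qCF true (evenize (cfNat p q))) - 1) := by
  intro q
  induction q using Nat.strong_induction_on with
  | _ q ih =>
  intro p hq hpq
  have hX := qX_ne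
  have ha : 1 ≤ p / q := Nat.div_pos hpq.le hq
  rw [cfNat_pos hq]
  generalize p / q = a at ha
  rcases Nat.eq_zero_or_pos (p % q) with hr | hr
  · rw [hr, cfNat_zero, evenize_single]
    obtain ⟨c, rfl⟩ := Nat.exists_eq_add_of_le' ha
    have : qCF true [c + 1 - 1, 1] = qNum (c + 1) := by
      simp [qCF, qNumInv, qNum_add_one]
    rw [this]
    exact ordGE_qNum_sub_one ha
  · have hrq : p % q < q := Nat.mod_lt _ hq
    have hb : 1 ≤ q / (p % q) := Nat.div_pos hrq.le hr
    rw [cfNat_pos hr]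
    generalize q / (p % q) = b at hb
    rcases Nat.eq_zero_or_pos (q % (p % q)) with hs | hs
    · -- Length two: the value is `[a]_q + q^{a+b-1} / [b]_q`.
      rw [hs, cfNat_zero, evenize_pair]
      obtain ⟨c, rfl⟩ := Nat.exists_eq_add_of_le' hb
      have e : qCF true [a, c + 1] = qNum a + RatFunc.X ^ (a + c) / qNum (c + 1) := by
        have h1 := pow_mul_qNumInv (c + 1)
        have h2 : qNumInv (c + 1) = qNum (c + 1) / RatFunc.X ^ c := by
          rw [eq_div_iff (pow_ne_zero _ hX)]
          apply mul_left_cancel₀ hX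
          rw [← h1]; ring
        simp only [qCF, div_zero, add_zero, h2]
        rw [pow_add, div_div_eq_mul_div]
      rw [e, lau_add, lau_div, lau_pow, lau_X, add_sub_right_comm, div_eq_mul_inv]
      refine (ordGE_qNum_sub_one ha).add ?_
      exact ((ordGE_qL_pow (a + c)).mul (ordGE_qNum_sub_one hb).inv_unit).mono
        (by push_cast; omega)
    · have hsr : q % (p % q) < p % q := Nat.mod_lt _ hr
      have hG := ih _ (hsr.trans hrq) (p % q) hs hsr
      rw [evenize_cons_cons _ _ (by rw [cfNat_pos hs]; simp)]
      generalize qCF_G : qCF true (evenize (cfNat (p % q) (q % (p % q)))) = G at hG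
      have e : qCF true (a :: b :: evenize (cfNat (p % q) (q % (p % q)))) =
          qNum a + RatFunc.X ^ (a + b) / (RatFunc.X * qNum b + 1 / G) := by
        have h2 : RatFunc.X * qNum b + 1 / G =
            RatFunc.X ^ b * (qNumInv b + RatFunc.X⁻¹ ^ b / G) := by
          rw [mul_add, pow_mul_qNumInv, inv_pow]
          field_simp
        simp only [qCF, qCF_G, h2]
        rw [pow_add, mul_comm (RatFunc.X ^ a), mul_div_mul_left _ _ (pow_ne_zero _ hX)]
      rw [e, lau_add, lau_div, lau_pow, lau_X, add_sub_right_comm, div_eq_mul_inv]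
      refine (ordGE_qNum_sub_one ha).add ?_
      have hH : OrdGE 1 (lau (RatFunc.X * qNum b + 1 / G) - 1) := by
        rw [lau_add, lau_mul, lau_div, lau_one, lau_X, one_div, add_sub_assoc]
        exact (ordGE_qL.mul (ordGE_qNum b)).add hG.inv_sub_one
      exact ((ordGE_qL_pow (a + b)).mul hH.inv_unit).mono (by push_cast; omega)

lemma qRat_one : qRat 1 = 1 := by
  have hX := qX_ne
  have h2 : qRatCF 2 = 1 + RatFunc.X := by
    have : cfNat 2 1 = [2] := by
      rw [cfNat_pos one_pos, Nat.mod_one, cfNat_zero, Nat.div_one]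
    simp [qRatCF, this, evenize_single, qCF, qNum, qNumInv]
  rw [qRat_eq 1 1 (by norm_num), Nat.cast_one, one_add_one_eq_two, h2]
  simp [qNum, hX]

lemma ordGE_qRat_sub_one {α : ℚ} (hα : 1 ≤ α) : OrdGE 1 (lau (qRat α) - 1) := by
  rcases hα.eq_or_lt with rfl | h
  · rw [qRat_one, lau_one, sub_self]
    simp [OrdGE]
  · rw [qRat, if_pos h]
    refine ordGE_qCF _ _ α.pos ?_
    have h' := h
    have hp : (0 : ℚ) < α.den := by exact_mod_cast α.pos
    rw [← Rat.num_div_den α, lt_div_iff₀ hp, one_mul] at h'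
    have : (α.den : ℤ) < α.num := by exact_mod_cast h'
    omega

/-! ### The terms of the series and the telescoping identity -/

lemma qPow_eq (α : ℚ) : qPow α = 1 + (RatFunc.X - 1) * qRat α := by
  rw [qPow, qRat_add_one]; ring

lemma qPow_add_one (α : ℚ) : qPow (α + 1) = RatFunc.X * qPow α := by
  rw [qPow_eq, qPow_eq, qRat_add_one]; ring

lemma qPow_sub_nat (α : ℚ) (k : ℕ) : qPow α = RatFunc.X ^ k * qPow (α - k) := by
  induction k with
  | zero => simp
  | succ k ih =>
    rw [ih, pow_succ, mul_assoc, ← qPow_add_one]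
    congr 2
    push_cast; ring

/-- The term `q^k ∏_{i<k} (x - q^i) / (1 - q^{i+1})`. At `x = {α-1}_q` it is the `k`-th term of
`S_α`. -/
def telTerm (x : RatFunc ℚ) (k : ℕ) : RatFunc ℚ :=
  RatFunc.X ^ k * ∏ i ∈ Finset.range k, (x - RatFunc.X ^ i) / (1 - RatFunc.X ^ (i + 1))

lemma telTerm_succ (x : RatFunc ℚ) (k : ℕ) : telTerm x (k + 1) =
    telTerm x k * (RatFunc.X * ((x - RatFunc.X ^ k) / (1 - RatFunc.X ^ (k + 1)))) := by
  rw [telTerm, telTerm, Finset.prod_range_succ]; ring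

lemma ordGE_one_sub_pow (k : ℕ) : OrdGE 1 (lau (1 - RatFunc.X ^ (k + 1)) - 1) := by
  rw [lau_sub, lau_pow, lau_one, lau_X, sub_sub_cancel_left]
  have := (ordGE_qL_pow (k + 1)).mono (show (1 : ℤ) ≤ ((k + 1 : ℕ) : ℤ) by push_cast; omega)
  simpa [OrdGE] using this

lemma one_sub_pow_ne (k : ℕ) : (1 - RatFunc.X ^ (k + 1) : RatFunc ℚ) ≠ 0 := by
  intro h
  have h1 := ordGE_iff.1 (ordGE_one_sub_pow k) 0 (by norm_num)
  rw [h] at h1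
  simp [lau_eq] at h1

/-- The case `α ↦ α + 1` of the terms: in `∏_{i≤k} (qx - q^i)` the factor `i = 0` splits off and
the others are `q` times the factors of `∏_{i<k} (x - q^i)`. -/
lemma telTerm_X_mul (x : RatFunc ℚ) (k : ℕ) :
    telTerm (RatFunc.X * x) (k + 1) * (1 - RatFunc.X ^ (k + 1)) =
      RatFunc.X ^ (k + 1) * (RatFunc.X * x - 1) * telTerm x k := by
  have h : ∀ i ∈ Finset.range k, RatFunc.X * x - RatFunc.X ^ (i + 1) =
      RatFunc.X * (x - RatFunc.X ^ i) := fun i _ => by ring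
  have hne := one_sub_pow_ne k
  rw [telTerm, telTerm, Finset.prod_div_distrib, Finset.prod_div_distrib,
    Finset.prod_range_succ', Finset.prod_range_succ (fun i => 1 - RatFunc.X ^ (i + 1)),
    Finset.prod_congr rfl h, Finset.prod_mul_distrib, Finset.prod_const, Finset.card_range]
  field_simp

/-- The partial sums of `S_{α+1} = (1 - {α}_q) S_α` agree up to the explicit error
`{α}_q` times the last term; here `x = {α-1}_q`. -/
lemma sum_telTerm (x : RatFunc ℚ) (K : ℕ) :
    ∑ k ∈ Finset.range (K + 1), telTerm (RatFunc.X * x) k =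
      (1 - RatFunc.X * x) * ∑ k ∈ Finset.range (K + 1), telTerm x k +
        RatFunc.X * x * telTerm x K := by
  induction K with
  | zero => simp [telTerm]
  | succ K ih =>
    rw [Finset.sum_range_succ, ih, Finset.sum_range_succ _ (K + 1)]
    have hne := one_sub_pow_ne K
    have h1 := eq_div_of_mul_eq hne (telTerm_X_mul x K)
    rw [h1, telTerm_succ]
    field_simp
    ring

lemma ordGE_telTerm {x : RatFunc ℚ} (hx : OrdGE 0 (lau x)) (k : ℕ) :
    OrdGE k (lau (telTerm x k)) := by
  induction k with
  | zero => simpa [telTerm, lau_one] using ordGE_one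
  | succ k ih =>
    rw [telTerm_succ, lau_mul, lau_mul, lau_div, lau_sub x, lau_pow, lau_X, div_eq_mul_inv]
    have h := (hx.sub ((ordGE_qL_pow k).mono (Int.natCast_nonneg k))).mul
      (ordGE_one_sub_pow k).inv_unit
    push_cast
    exact ih.mul (ordGE_qL.mul h)

lemma gammaTerm_eq (α : ℚ) (k : ℕ) : gammaTerm α k = lau (telTerm (qPow (α - 1)) k) := by
  have hX := qX_ne
  have h1 : gammaTerm α k =
      lau ((-1) ^ k * RatFunc.X ^ (k * (k + 1) / 2) * qBinom (α - 1) k) := by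
    rw [gammaTerm, lau_mul, lau_mul, lau_pow, lau_pow, lau_X]
    congr 3
    simp [lau_eq]
  rw [h1]
  congr 1
  clear h1
  induction k with
  | zero => simp [qBinom, qFact, telTerm]
  | succ k ih =>
    have hT : (k + 1) * (k + 1 + 1) / 2 = k * (k + 1) / 2 + (k + 1) := by
      rw [show (k + 1) * (k + 1 + 1) = k * (k + 1) + (k + 1) * 2 by ring,
        Nat.add_mul_div_right _ _ two_pos]
    have hB : qBinom (α - 1) (k + 1) =
        qBinom (α - 1) k * (qRat (α - 1 - k) / qNum (k + 1)) := by
      simp only [qBinom, qFact, Finset.prod_range_succ]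
      rw [mul_div_mul_comm]
    have hne := one_sub_pow_ne k
    have hq := qNum_mul (k + 1)
    have hn : qNum (k + 1) ≠ 0 := by
      intro h
      rw [h, zero_mul] at hq
      exact hne (by linear_combination hq)
    have hratio : -RatFunc.X ^ (k + 1) * (qRat (α - 1 - k) / qNum (k + 1)) =
        RatFunc.X * ((qPow (α - 1) - RatFunc.X ^ k) / (1 - RatFunc.X ^ (k + 1))) := by
      rw [qPow_sub_nat (α - 1) k, qPow_eq, mul_div_assoc', mul_div_assoc', div_eq_div_iff hn hne]
      linear_combination
        (-RatFunc.X ^ (k + 1) * qRat (α - 1 - k)) * hq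
    rw [telTerm_succ, ← ih, ← hratio, hT, hB, pow_succ, pow_add]
    ring

/-! ### Passage to the limit and the factor `T_α` -/

/-- The sum differs from its `K`-th partial sum by `O(q^K)`. -/
lemma IsGammaSum.ordGE {α : ℚ} {S : LaurentSeries ℚ} (hS : IsGammaSum α S)
    (hx : OrdGE 0 (lau (qPow (α - 1)))) (K : ℕ) :
    OrdGE K (S - lau (∑ k ∈ Finset.range K, telTerm (qPow (α - 1)) k)) := by
  rw [ordGE_iff]
  intro m hm
  obtain ⟨K₀, hK₀⟩ := hS m
  have h1 := hK₀ (max K₀ K) (le_max_left _ _)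
  have h2 : OrdGE K (∑ k ∈ Finset.Ico K (max K₀ K), gammaTerm α k) := by
    refine OrdGE.sum _ _ fun i hi => ?_
    rw [gammaTerm_eq]
    exact (ordGE_telTerm hx i).mono (by exact_mod_cast (Finset.mem_Ico.1 hi).1)
  rw [← Finset.sum_range_add_sum_Ico _ (le_max_right K₀ K), HahnSeries.coeff_add,
    ordGE_iff.1 h2 m hm, add_zero] at h1
  simp only [lau_sum, ← gammaTerm_eq]
  rw [HahnSeries.coeff_sub, h1, sub_self]

lemma ordGE_qPow {α : ℚ} (hα : 1 ≤ α) : OrdGE 1 (lau (qPow α)) := by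
  have h := ordGE_qRat_sub_one hα
  have e : lau (qPow α) = (qL - 1) * (lau (qRat α) - 1) + qL := by
    rw [qPow_eq, lau_add, lau_mul, lau_sub, lau_one, lau_X]; ring
  rw [e]
  refine OrdGE.add ?_ ordGE_qL
  exact ((ordGE_qL.mono zero_le_one).sub ordGE_one).mul h

lemma ordGE_qPow_sub_one {α : ℚ} (hα : 1 ≤ α) : OrdGE 0 (lau (qPow (α - 1))) := by
  have hX : qL ≠ 0 := by simp [qL]
  have h : lau (qPow (α - 1)) = HahnSeries.single (-1) 1 * lau (qPow α) := by
    have e := qPow_add_one (α - 1)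
    rw [sub_add_cancel] at e
    rw [e, lau_mul, lau_X, qL, ← mul_assoc, HahnSeries.single_mul_single]
    simp
  rw [h]
  exact (show OrdGE (-1) _ from HahnSeries.orderTop_single_le).mul (ordGE_qPow hα)

/-- `S_{α+1} = (1 - {α}_q) S_α`. -/
lemma gammaSum_succ {α : ℚ} (hα : 1 ≤ α) {S S' : LaurentSeries ℚ}
    (hS : IsGammaSum α S) (hS' : IsGammaSum (α + 1) S') :
    S' = (1 - lau (qPow α)) * S := by
  rw [← sub_eq_zero]
  refine eq_zero_of_ordGE fun K => ?_
  have hx := ordGE_qPow_sub_one hα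
  have hQ := (ordGE_qPow hα).mono zero_le_one
  have hr := ordGE_telTerm hx K
  have hP := hS.ordGE hx (K + 1)
  have hP' := hS'.ordGE (by rwa [add_sub_cancel_right]) (K + 1)
  have e := qPow_add_one (α - 1)
  rw [sub_add_cancel] at e
  rw [add_sub_cancel_right, e, sum_telTerm, ← e, lau_add, lau_mul, lau_mul, lau_sub, lau_one]
    at hP'
  have hle : (K : ℤ) ≤ ((K + 1 : ℕ) : ℤ) := by push_cast; omega
  have h := ((hP'.mono hle).add ((hQ.mul hr).mono (zero_add _).ge)).sub
    (((ordGE_one.sub hQ).mul (hP.mono hle)).mono (zero_add _).ge)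
  convert h using 1
  ring

/-- `(1-q) · (1-q)^{-α} = (1-q)^{-(α-1)}`, by Pascal's rule. -/
lemma Tser_succ (α : ℚ) : (1 - qL) * Tser (α + 1) = Tser α := by
  have hq : (1 - qL) = HahnSeries.ofPowerSeries ℤ ℚ (1 - PowerSeries.X) := by
    rw [map_sub, map_one, HahnSeries.ofPowerSeries_X, qL]
  rw [hq, Tser, Tser, ← map_mul]
  congr 1
  ext n
  cases n with
  | zero => simp [sub_mul, genBinom]
  | succ n =>
    rw [sub_mul, one_mul, map_sub, PowerSeries.coeff_succ_X_mul]
    simp only [PowerSeries.coeff_mk, genBinom]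
    rw [Finset.prod_range_succ, Finset.prod_range_succ', Nat.factorial_succ]
    have h : ∏ k ∈ Finset.range n, (α - 1 + ((k + 1 : ℕ) : ℚ)) =
        ∏ k ∈ Finset.range n, (α + 1 - 1 + (k : ℚ)) :=
      Finset.prod_congr rfl fun k _ => by push_cast; ring
    rw [h]
    have hf : (n.factorial : ℚ) ≠ 0 := by exact_mod_cast n.factorial_ne_zero
    have hn : (n + 1 : ℚ) ≠ 0 := by positivity
    push_cast
    field_simp
    ring

/-- The shift identity `Γ_q(α+1) = [α]_q·Γ_q(α)` for `α ≥ 1`, where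
`Γ_q(α) = S_α·T_α` with `S_α = B_{α-1}(q,-q)` and `T_α = 1/(1-q)^{α-1}`. -/
theorem qGamma_succ (α : ℚ) (hα : 1 ≤ α) (S S' : LaurentSeries ℚ)
    (hS : IsGammaSum α S) (hS' : IsGammaSum (α + 1) S') :
    S' * Tser (α + 1) = lau (qRat α) * (S * Tser α) := by
  rw [gammaSum_succ hα hS hS', ← Tser_succ α, qPow_eq, lau_add, lau_mul, lau_sub, lau_one, lau_X]
  ring

end
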